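/- arXiv:2505.24703 — 6 statements merged into one kernel-verified Lean document; each statement's English description precedes it below -/
import Mathlib

section
/- Let x ∈ X be an image, R a set of patch regions, y : Fin c → Bool, infer : Fin c → X → Bool, and κ : Fin c → Bool such that for every class i with κ i = true one has infer i x' = y i for every x' ∈ S(x,R). Set TP_lower := |{i : κ i = true ∧ y i = true}|, FP_upper := |{i : κ i = false ∧ y i = false}|, FN_upper := |{i : κ i = false ∧ y i = true}|. Then for every x' ∈ S(x,R), with ŷ := (fun i => infer i x'), one has (TP_lower : ℝ)/(TP_lower + FP_upper) ≤ TP(y,ŷ)/(TP(y,ŷ) + FP(y,ŷ)) and (TP_lower : ℝ)/(TP_lower + FN_upper) ≤ TP(y,ŷ)/(TP(y,ŷ) + FN(y,ŷ)). (Certified precision and certified recall lower-bound the true precision and recall of the defended multi-label classifier irrespective of the attempted patch attack.) -/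
/-- Images with width `w`, height `h`, and `γ` channels. -/
abbrev Img (w h γ : ℕ) := Fin w → Fin h → Fin γ → ℝ

/-- The patched image: pixels inside the patch region (`r i j = false`) are replaced
by adversarial content `x''`. -/
def patch {w h γ : ℕ} (x : Img w h γ) (r : Fin w → Fin h → Bool) (x'' : Img w h γ) :
    Img w h γ :=
  fun i j k => if r i j then x i j k else x'' i j k

/-- The patch threat model `S(x, R)`. -/
def patchSet {w h γ : ℕ} (x : Img w h γ) (R : Set (Fin w → Fin h → Bool)) :
    Set (Img w h γ) :=
  { x' | ∃ r ∈ R, ∃ x'' : Img w h γ, x' = patch x r x'' }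

/-- True-positive count. -/
def TP {c : ℕ} (y yhat : Fin c → Bool) : ℕ :=
  (Finset.univ.filter fun i : Fin c => y i = true ∧ yhat i = true).card

/-- False-positive count. -/
def FP {c : ℕ} (y yhat : Fin c → Bool) : ℕ :=
  (Finset.univ.filter fun i : Fin c => y i = false ∧ yhat i = true).card

/-- False-negative count. -/
def FN {c : ℕ} (y yhat : Fin c → Bool) : ℕ :=
  (Finset.univ.filter fun i : Fin c => y i = true ∧ yhat i = false).card

theorem ratio_mono_aux (a b p q : ℕ) (h1 : a ≤ p) (h2 : q ≤ b) :
    (a : ℝ) / (a + b) ≤ (p : ℝ) / (p + q) := by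
  have h1' : (a : ℝ) ≤ p := by exact_mod_cast h1
  have h2' : (q : ℝ) ≤ b := by exact_mod_cast h2
  have ha : (0 : ℝ) ≤ a := Nat.cast_nonneg a
  have hq : (0 : ℝ) ≤ q := Nat.cast_nonneg q
  rcases Nat.eq_zero_or_pos a with h0 | h0
  · subst h0
    simp only [Nat.cast_zero, zero_div]
    positivity
  · have h0' : (0 : ℝ) < a := by exact_mod_cast h0
    rw [div_le_div_iff₀ (by linarith) (by linarith)]
    nlinarith [mul_le_mul h1' h2' hq (by linarith)]

/-- Certified precision and certified recall lower-bound the true precision and recall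
of the defended multi-label classifier irrespective of the attempted patch attack. -/
theorem certified_precision_recall_lower_bound {w h γ c : ℕ}
    (x : Img w h γ) (R : Set (Fin w → Fin h → Bool))
    (y : Fin c → Bool) (infer : Fin c → Img w h γ → Bool) (κ : Fin c → Bool)
    (hκ : ∀ i : Fin c, κ i = true → ∀ x' ∈ patchSet x R, infer i x' = y i)
    (TPlower FPupper FNupper : ℕ)
    (hTP : TPlower = (Finset.univ.filter fun i : Fin c => κ i = true ∧ y i = true).card)
    (hFP : FPupper = (Finset.univ.filter fun i : Fin c => κ i = false ∧ y i = false).card)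
    (hFN : FNupper = (Finset.univ.filter fun i : Fin c => κ i = false ∧ y i = true).card) :
    ∀ x' ∈ patchSet x R,
      (TPlower : ℝ) / (TPlower + FPupper)
          ≤ (TP y (fun i => infer i x') : ℝ)
            / (TP y (fun i => infer i x') + FP y (fun i => infer i x'))
      ∧ (TPlower : ℝ) / (TPlower + FNupper)
          ≤ (TP y (fun i => infer i x') : ℝ)
            / (TP y (fun i => infer i x') + FN y (fun i => infer i x')) := by
  intro x' hx'
  subst hTP hFP hFN
  have key : ∀ i, κ i = true → infer i x' = y i := fun i hi => hκ i hi x' hx'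
  constructor
  all_goals
    apply ratio_mono_aux
    all_goals
      apply Finset.card_le_card
      intro i hi
      have := key i
      simp only [Finset.mem_filter, Finset.mem_univ, true_and] at hi ⊢
      cases hk : κ i <;> simp_all
end

section
/- Let x ∈ X, R a finite set of patch regions, y : Fin c → Bool, infer : Fin c → X → Bool, and κ : Fin c → Bool such that for every class i with κ i = true one has infer i x' = y i for every x' ∈ S(x,R). Let I := {i : κ i = false ∧ y i = true} be the uncertified positive classes, and suppose for each i ∈ I there is λ i : R → Bool with: λ i r = true → infer i (patch(x,r,x'')) = true for all x'' ∈ X. Set TP_lower := |{i : κ i = true ∧ y i = true}| and FN_new := max_{r' ∈ R} |{i ∈ I : λ i r' = false}|. Then for every r ∈ R and every x'' ∈ X, the prediction ŷ := (fun i => infer i (patch(x,r,x''))) satisfies TP(y,ŷ) ≥ TP_lower + (|I| − FN_new) and FN(y,ŷ) ≤ FN_new. (Location-aware certification yields the improved true-positive lower bound TP_new = TP_lower + (FN − FN_new) under a single-patch attacker.) -/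
/-- Location-aware certification yields the improved true-positive lower bound
`TP_new = TP_lower + (FN − FN_new)` under a single-patch attacker. -/
theorem location_aware_improved_bounds {w h γ c : ℕ}
    (x : Img w h γ) (R : Finset (Fin w → Fin h → Bool))
    (y : Fin c → Bool) (infer : Fin c → Img w h γ → Bool) (κ : Fin c → Bool)
    (hκ : ∀ i : Fin c, κ i = true →
      ∀ x' ∈ patchSet x (↑R : Set (Fin w → Fin h → Bool)), infer i x' = y i)
    (I : Finset (Fin c))
    (hIdef : I = Finset.univ.filter fun i : Fin c => κ i = false ∧ y i = true)
    (lam : Fin c → (Fin w → Fin h → Bool) → Bool)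
    (hlam : ∀ i ∈ I, ∀ r ∈ R, lam i r = true →
      ∀ x'' : Img w h γ, infer i (patch x r x'') = true)
    (TPlower FNnew : ℕ)
    (hTP : TPlower = (Finset.univ.filter fun i : Fin c => κ i = true ∧ y i = true).card)
    (hFNnew : FNnew = R.sup fun r' => (I.filter fun i => lam i r' = false).card) :
    ∀ r ∈ R, ∀ x'' : Img w h γ,
      TPlower + (I.card - FNnew) ≤ TP y (fun i => infer i (patch x r x''))
      ∧ FN y (fun i => infer i (patch x r x'')) ≤ FNnew := by
  intro r hr x''
  have hsub : FN y (fun i => infer i (patch x r x'')) ≤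
      (I.filter fun i => lam i r = false).card := by
    unfold FN
    apply Finset.card_le_card
    intro i hi
    simp only [Finset.mem_filter, Finset.mem_univ, true_and] at hi
    obtain ⟨hy, hf⟩ := hi
    have hk : κ i = false := by
      by_contra hk
      have hk' : κ i = true := by simpa using hk
      have := hκ i hk' (patch x r x'') ⟨r, by simpa using hr, x'', rfl⟩
      rw [hf, hy] at this
      exact absurd this (by decide)
    have hiI : i ∈ I := by rw [hIdef]; simp [hk, hy]
    rw [Finset.mem_filter]
    refine ⟨hiI, ?_⟩
    by_contra hl
    have hl' : lam i r = true := by simpa using hl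
    have := hlam i hiI r hr hl' x''
    rw [hf] at this
    exact absurd this (by decide)
  have hle : (I.filter fun i => lam i r = false).card ≤ FNnew := by
    rw [hFNnew]
    exact Finset.le_sup (f := fun r' => (I.filter fun i => lam i r' = false).card) hr
  have hI : (I.filter fun i => lam i r = false).card ≤ I.card :=
    Finset.card_filter_le _ _
  have h1 : TP y (fun i => infer i (patch x r x'')) + FN y (fun i => infer i (patch x r x''))
      = (Finset.univ.filter fun i : Fin c => y i = true).card := by
    unfold TP FN
    rw [← Finset.card_filter_add_card_filter_not (s := Finset.univ.filter fun i : Fin c => y i = true)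
      (fun i => infer i (patch x r x'') = true)]
    simp [Finset.filter_filter]
  have h2 : TPlower + I.card = (Finset.univ.filter fun i : Fin c => y i = true).card := by
    rw [hTP, hIdef,
      ← Finset.card_filter_add_card_filter_not (s := Finset.univ.filter fun i : Fin c => y i = true)
      (fun i => κ i = true)]
    simp [Finset.filter_filter, and_comm]
  omega
end

section
/- Let x ∈ X, R a finite set of patch regions, y : Fin c → Bool, infer : Fin c → X → Bool, and κ : Fin c → Bool such that for every class i with κ i = true one has infer i x' = y i for every x' ∈ S(x,R). Let I' := {i : κ i = false ∧ y i = false} be the uncertified negative classes, and suppose for each i ∈ I' there is λ i : R → Bool with: λ i r = true → infer i (patch(x,r,x'')) = false for all x'' ∈ X. Then for every r ∈ R and every x'' ∈ X, the prediction ŷ := (fun i => infer i (patch(x,r,x''))) satisfies FP(y,ŷ) ≤ FP_new, where FP_new := max_{r' ∈ R} |{i ∈ I' : λ i r' = false}|. (False-positive analogue of the location-aware certification theorem.) -/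
/-- False-positive analogue of the location-aware certification theorem: under a
single-patch attack at any location `r ∈ R` with any content `x''`, the number of
false positives is at most `FP_new = max_{r' ∈ R} |{i ∈ I' : lam i r' = false}|`. -/
theorem location_aware_fp_bound {w h γ c : ℕ}
    (x : Img w h γ) (R : Finset (Fin w → Fin h → Bool))
    (y : Fin c → Bool) (infer : Fin c → Img w h γ → Bool) (κ : Fin c → Bool)
    (hκ : ∀ i : Fin c, κ i = true →
      ∀ x' ∈ patchSet x (↑R : Set (Fin w → Fin h → Bool)), infer i x' = y i)
    (I' : Finset (Fin c))
    (hIdef : I' = Finset.univ.filter fun i : Fin c => κ i = false ∧ y i = false)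
    (lam : Fin c → (Fin w → Fin h → Bool) → Bool)
    (hlam : ∀ i ∈ I', ∀ r ∈ R, lam i r = true →
      ∀ x'' : Img w h γ, infer i (patch x r x'') = false)
    (FPnew : ℕ)
    (hFPnew : FPnew = R.sup fun r' => (I'.filter fun i => lam i r' = false).card) :
    ∀ r ∈ R, ∀ x'' : Img w h γ,
      FP y (fun i => infer i (patch x r x'')) ≤ FPnew := by
  intro r hr x''
  have hle : (I'.filter fun i => lam i r = false).card ≤ FPnew := by
    rw [hFPnew]
    exact Finset.le_sup (f := fun r' => (I'.filter fun i => lam i r' = false).card) hr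
  refine le_trans (Finset.card_le_card ?_) hle
  intro i hi
  obtain ⟨hy, hp⟩ := (Finset.mem_filter.mp hi).2
  have hk : κ i = false := by
    by_contra hk
    have h1 := hκ i (by simpa using hk) (patch x r x'') ⟨r, hr, x'', rfl⟩
    simp_all
  have hI : i ∈ I' := by
    rw [hIdef]
    simp [hk, hy]
  refine Finset.mem_filter.mpr ⟨hI, ?_⟩
  by_contra hl
  have h2 := hlam i hI r hr (by simpa using hl) x''
  simp_all
end

section
/- Let F : X → L be a single-label classifier, M a finite set of masks, m* ∈ M, x ∈ X, and y ∈ L with F((x ∘ m*) ∘ m) = y for every m ∈ M. Let r be a patch region covered by m*, x'' ∈ X arbitrary, and x' := patch(x,r,x''). Suppose m_dis ∈ M is a first-round disagreer on x' with incorrect label, i.e., F(x' ∘ m_dis) = ŷ_dis for some ŷ_dis ≠ y. Then the second-round predictions of m_dis are not all equal: there exist m₁, m₂ ∈ M with F((x' ∘ m_dis) ∘ m₁) ≠ F((x' ∘ m_dis) ∘ m₂); in particular F((x' ∘ m_dis) ∘ m*) = y while F((x' ∘ m_dis) ∘ m_dis) = ŷ_dis. (Incorrect disagreer masks fail to achieve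 second-round consensus in the double-masking algorithm.) -/
/-- Masking an image: occluded pixels (`m i j = false`) are set to `0`. -/
def maskImg {w h γ : ℕ} (x : Img w h γ) (m : Fin w → Fin h → Bool) : Img w h γ :=
  fun i j k => if m i j then x i j k else 0

/-- Incorrect disagreer masks fail to achieve second-round consensus in the
double-masking algorithm: if `m*` has the two-mask robustness property, `r` is covered
by `m*`, `x' = patch(x, r, x'')`, and `m_dis ∈ M` is a first-round disagreer with
incorrect label `ŷ_dis ≠ y`, then the second-round predictions of `m_dis` are not all
equal; in particular `F((x' ∘ m_dis) ∘ m*) = y` while `F((x' ∘ m_dis) ∘ m_dis) = ŷ_dis`. -/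
theorem incorrect_disagreer_no_consensus {w h γ : ℕ} {L : Type*}
    (F : Img w h γ → L) (M : Finset (Fin w → Fin h → Bool))
    (mstar : Fin w → Fin h → Bool) (hmstar : mstar ∈ M)
    (x : Img w h γ) (y : L)
    (hcert : ∀ m ∈ M, F (maskImg (maskImg x mstar) m) = y)
    (r : Fin w → Fin h → Bool) (hcov : ∀ i j, mstar i j = true → r i j = true)
    (x'' : Img w h γ) (x' : Img w h γ) (hx' : x' = patch x r x'')
    (mdis : Fin w → Fin h → Bool) (hmdis : mdis ∈ M)
    (ydis : L) (hdis : F (maskImg x' mdis) = ydis) (hne : ydis ≠ y) :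
    (∃ m₁ ∈ M, ∃ m₂ ∈ M,
        F (maskImg (maskImg x' mdis) m₁) ≠ F (maskImg (maskImg x' mdis) m₂))
    ∧ F (maskImg (maskImg x' mdis) mstar) = y
    ∧ F (maskImg (maskImg x' mdis) mdis) = ydis := by
  have h1 : F (maskImg (maskImg x' mdis) mstar) = y := by
    rw [← hcert mdis hmdis]
    congr 1
    funext i j k
    have hc := hcov i j
    subst hx'
    simp only [maskImg, patch]
    cases hm : mstar i j
    · simp
    · simp [hc hm]
  have h2 : F (maskImg (maskImg x' mdis) mdis) = ydis := by
    rw [← hdis]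
    congr 1
    funext i j k
    simp only [maskImg]
    cases mdis i j <;> simp
  refine ⟨⟨mdis, hmdis, mstar, hmstar, ?_⟩, h1, h2⟩
  rw [h1, h2]
  exact hne
end

section
/- Let F : X → L be a single-label classifier into a finite label type L, M a finite nonempty set of masks that is R-covering for a set R of patch regions, x ∈ X, and y ∈ L. If F((x ∘ m₀) ∘ m₁) = y for all pairs m₀, m₁ ∈ M, then for every adversarial image x' ∈ S(x,R) the double-masking inference procedure returns the correct label: DoubleMaskingInfer(F, M, x') = y. (Correctness of PatchCleanser's double-masking defense, Theorem 3.) -/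
noncomputable section
open scoped Classical

/-- Iterate over a list of (disagreer) masks in order; for the first one whose
second-round predictions all agree (consensus), return its first-round prediction. -/
def firstConsensus {w h γ : ℕ} {L : Type*} (F : Img w h γ → L)
    (M : Finset (Fin w → Fin h → Bool)) (x : Img w h γ) :
    List (Fin w → Fin h → Bool) → Option L
  | [] => none
  | m :: rest =>
      if ∀ m₁ ∈ M, ∀ m₂ ∈ M,
          F (maskImg (maskImg x m) m₁) = F (maskImg (maskImg x m) m₂) then
        some (F (maskImg x m))
      else firstConsensus F M x rest

/-- A label attaining the maximum multiplicity among the first-round masked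
predictions (ties broken by a fixed rule). -/
def majLabel {w h γ : ℕ} {L : Type*} [Nonempty L] (F : Img w h γ → L)
    (M : Finset (Fin w → Fin h → Bool)) (x : Img w h γ) : L :=
  if hM : M.Nonempty then
    Classical.choose ((M.image fun m => F (maskImg x m)).exists_max_image
      (fun l => (M.filter fun m => F (maskImg x m) = l).card) (hM.image _))
  else Classical.arbitrary L

/-- PatchCleanser's double-masking inference procedure: return the first-round majority
label if there are no disagreers; otherwise iterate over the disagreers in a fixed
order, returning the first-round prediction of the first disagreer achieving
second-round consensus; if none does, return the majority label. -/
def DoubleMaskingInfer {w h γ : ℕ} {L : Type*} [Nonempty L] (F : Img w h γ → L)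
    (M : Finset (Fin w → Fin h → Bool)) (x : Img w h γ) : L :=
  let ymaj := majLabel F M x
  let D := M.filter fun m => F (maskImg x m) ≠ ymaj
  match firstConsensus F M x D.toList with
  | some l => l
  | none => ymaj

theorem fc_some {w h γ : ℕ} {L : Type*} (F : Img w h γ → L)
    (M : Finset (Fin w → Fin h → Bool)) (x : Img w h γ) (l : List (Fin w → Fin h → Bool)) (a : L)
    (hl : firstConsensus F M x l = some a) :
    ∃ m ∈ l, (∀ m₁ ∈ M, ∀ m₂ ∈ M,
      F (maskImg (maskImg x m) m₁) = F (maskImg (maskImg x m) m₂)) ∧ F (maskImg x m) = a := by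
  induction l with
  | nil => simp [firstConsensus] at hl
  | cons m rest ih =>
    rw [firstConsensus] at hl
    split_ifs at hl with hc
    · exact ⟨m, by simp, hc, Option.some.inj hl⟩
    · obtain ⟨m', h1, h2⟩ := ih hl
      exact ⟨m', List.mem_cons_of_mem _ h1, h2⟩

theorem fc_none {w h γ : ℕ} {L : Type*} (F : Img w h γ → L)
    (M : Finset (Fin w → Fin h → Bool)) (x : Img w h γ) (l : List (Fin w → Fin h → Bool))
    (hl : firstConsensus F M x l = none) :
    ∀ m ∈ l, ¬ (∀ m₁ ∈ M, ∀ m₂ ∈ M,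
      F (maskImg (maskImg x m) m₁) = F (maskImg (maskImg x m) m₂)) := by
  induction l with
  | nil => simp
  | cons m rest ih =>
    rw [firstConsensus] at hl
    split_ifs at hl with hc
    intro m' hm'
    rcases List.mem_cons.1 hm' with rfl | h1
    · exact hc
    · exact ih hl m' h1

theorem mask_idem {w h γ : ℕ} (x : Img w h γ) (m : Fin w → Fin h → Bool) :
    maskImg (maskImg x m) m = maskImg x m := by
  funext i j k
  by_cases hm : m i j = true <;> simp [maskImg, hm]

theorem mask_comm {w h γ : ℕ} (x : Img w h γ) (m m' : Fin w → Fin h → Bool) :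
    maskImg (maskImg x m) m' = maskImg (maskImg x m') m := by
  funext i j k
  by_cases hm : m i j = true <;> by_cases hm' : m' i j = true <;> simp [maskImg, hm, hm']

theorem mask_patch {w h γ : ℕ} (x x'' : Img w h γ) (r m : Fin w → Fin h → Bool)
    (hc : ∀ i j, m i j = true → r i j = true) :
    maskImg (patch x r x'') m = maskImg x m := by
  funext i j k
  by_cases hm : m i j = true
  · simp [maskImg, patch, hm, hc i j hm]
  · simp [maskImg, hm]

/-- Correctness of PatchCleanser's double-masking defense (Theorem 3): if the mask set
`M` is `R`-covering and all two-mask predictions on `x` equal `y`, then double-masking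
inference returns `y` on every adversarial image `x' ∈ S(x, R)`. -/
theorem double_masking_correct {w h γ : ℕ} {L : Type*} [Fintype L] [Nonempty L]
    (F : Img w h γ → L) (M : Finset (Fin w → Fin h → Bool)) (hM : M.Nonempty)
    (R : Set (Fin w → Fin h → Bool))
    (hcover : ∀ r ∈ R, ∃ m ∈ M, ∀ i j, m i j = true → r i j = true)
    (x : Img w h γ) (y : L)
    (hcert : ∀ m₀ ∈ M, ∀ m₁ ∈ M, F (maskImg (maskImg x m₀) m₁) = y) :
    ∀ x' ∈ patchSet x R, DoubleMaskingInfer F M x' = y := by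
  rintro x' ⟨r, hr, x'', rfl⟩
  obtain ⟨m, hm, hmr⟩ := hcover r hr
  have hp := mask_patch x x'' r m hmr
  unfold DoubleMaskingInfer
  dsimp only
  split
  · rename_i l hl
    obtain ⟨m', hm', hc, rfl⟩ := fc_some _ _ _ _ _ hl
    have hm'M : m' ∈ M := (Finset.mem_filter.1 (Finset.mem_toList.1 hm')).1
    have h1 := hc m' hm'M m hm
    rw [mask_idem, mask_comm, hp] at h1
    rw [h1]
    exact hcert m hm m' hm'M
  · rename_i hl
    by_contra hne
    refine fc_none _ _ _ _ hl m ?_ ?_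
    · rw [Finset.mem_toList, Finset.mem_filter]
      refine ⟨hm, ?_⟩
      rw [hp, ← mask_idem, hcert m hm m hm]
      exact fun e => hne e.symm
    · intro m₁ h₁ m₂ h₂
      rw [hp, hcert m hm m₁ h₁, hcert m hm m₂ h₂]

end
end

section
/- Let x ∈ X, R a finite set of patch regions, y : Fin c → Bool, infer : Fin c → X → Bool, and κ : Fin c → Bool such that for every class i with κ i = true one has infer i x' = y i for every x' ∈ S(x,R). Let I := {i : κ i = false ∧ y i = true}, and suppose for each i ∈ I there is λ i : R → Bool with: λ i r = true → infer i (patch(x,r,x'')) = true for all x'' ∈ X. Set TP_lower := |{i : κ i = true ∧ y i = true}|, FN_new := max_{r' ∈ R} |{i ∈ I : λ i r' = false}|, and TP_new := TP_lower + (|I| − FN_new). Then for every r ∈ R and every x'' ∈ X, the prediction ŷ := (fun i => infer i (patch(x,r,x''))) satisfies (TP_new : ℝ)/(TP_new + FN_new) ≤ TP(y,ŷ)/(TP(y,ŷ) + FN(y,ŷ)). (The location-aware certified recall lower-bounds the true recall under any single-patch attack.) -/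
/-- The location-aware certified recall `TP_new / (TP_new + FN_new)` lower-bounds the
true recall `TP / (TP + FN)` under any single-patch attack. -/
theorem location_aware_certified_recall {w h γ c : ℕ}
    (x : Img w h γ) (R : Finset (Fin w → Fin h → Bool))
    (y : Fin c → Bool) (infer : Fin c → Img w h γ → Bool) (κ : Fin c → Bool)
    (hκ : ∀ i : Fin c, κ i = true →
      ∀ x' ∈ patchSet x (↑R : Set (Fin w → Fin h → Bool)), infer i x' = y i)
    (I : Finset (Fin c))
    (hIdef : I = Finset.univ.filter fun i : Fin c => κ i = false ∧ y i = true)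
    (lam : Fin c → (Fin w → Fin h → Bool) → Bool)
    (hlam : ∀ i ∈ I, ∀ r ∈ R, lam i r = true →
      ∀ x'' : Img w h γ, infer i (patch x r x'') = true)
    (TPlower FNnew TPnew : ℕ)
    (hTP : TPlower = (Finset.univ.filter fun i : Fin c => κ i = true ∧ y i = true).card)
    (hFNnew : FNnew = R.sup fun r' => (I.filter fun i => lam i r' = false).card)
    (hTPnew : TPnew = TPlower + (I.card - FNnew)) :
    ∀ r ∈ R, ∀ x'' : Img w h γ,
      (TPnew : ℝ) / (TPnew + FNnew)
        ≤ (TP y (fun i => infer i (patch x r x'')) : ℝ)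
          / (TP y (fun i => infer i (patch x r x''))
              + FN y (fun i => infer i (patch x r x''))) := by
  intro r hr x''
  have h1 : FN y (fun i => infer i (patch x r x'')) ≤ FNnew := by
    rw [hFNnew]
    refine le_trans ?_ (Finset.le_sup (f := fun r' => (I.filter fun i => lam i r' = false).card) hr)
    apply Finset.card_le_card
    intro i hi
    simp only [Finset.mem_filter, Finset.mem_univ, true_and] at hi
    obtain ⟨hy, hf⟩ := hi
    have hk : κ i = false := by
      by_contra hk
      have := hκ i (by simpa using hk) (patch x r x'') ⟨r, hr, x'', rfl⟩
      rw [hf, hy] at this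
      exact absurd this (by decide)
    have hI : i ∈ I := by
      rw [hIdef]
      simp [hk, hy]
    refine Finset.mem_filter.2 ⟨hI, ?_⟩
    by_contra hl
    have := hlam i hI r hr (by simpa using hl) x''
    rw [hf] at this
    exact absurd this (by decide)
  have h2 : FNnew ≤ I.card := by
    rw [hFNnew]
    exact Finset.sup_le fun r' _ => Finset.card_le_card (Finset.filter_subset _ _)
  have h3 : TP y (fun i => infer i (patch x r x'')) + FN y (fun i => infer i (patch x r x''))
      = (Finset.univ.filter fun i : Fin c => y i = true).card := by
    unfold TP FN
    rw [← Finset.card_union_of_disjoint]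
    · congr 1
      ext i
      cases hh : infer i (patch x r x'') <;> simp [hh]
    · rw [Finset.disjoint_filter]
      rintro i - ⟨_, h⟩ ⟨_, h'⟩
      simp [h] at h'
  have h4 : TPlower + I.card = (Finset.univ.filter fun i : Fin c => y i = true).card := by
    rw [hTP, hIdef, ← Finset.card_union_of_disjoint]
    · congr 1
      ext i
      cases hh : κ i <;> simp [hh]
    · rw [Finset.disjoint_filter]
      rintro i - ⟨h, _⟩ ⟨h', _⟩
      simp [h] at h'
  have h5 : TPnew + FNnew = TP y (fun i => infer i (patch x r x''))
      + FN y (fun i => infer i (patch x r x'')) := by omega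
  have h6 : TPnew ≤ TP y (fun i => infer i (patch x r x'')) := by omega
  have h5' : (TPnew : ℝ) + FNnew = TP y (fun i => infer i (patch x r x''))
      + FN y (fun i => infer i (patch x r x'')) := by exact_mod_cast h5
  rw [h5']
  have h6' : (TPnew : ℝ) ≤ TP y (fun i => infer i (patch x r x'')) := by exact_mod_cast h6
  exact div_le_div_of_nonneg_right h6' (by positivity)
end
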